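/- For every positive integer n, the following identity of rational numbers holds: Σ_{d=1}^{2n-1} Σ_{ℓ=1}^{2n-d} Σ_{i_1=ℓ+d+1}^{2n+1} Σ_{i_2=ℓ+d}^{i_1-1} (4n+1-i_1)(i_1-i_2+1)(i_2-ℓ-d+1) = (128n^7 + 952n^6 + 1652n^5 + 490n^4 - 553n^3 - 182n^2 + 33n)/630. -/

import Mathlib

/-!
The four sums are evaluated from the inside out, each by telescoping. Put `m = i₁ - (ℓ + d)`,
`T = 2n + 1 - (ℓ + d)` and `e = 2n - d`. Every summand is then a polynomial whose antidifference is
a short combination of binomial coefficients: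

* the sum over `i₂` is `C(m+3,3) - (m+1) = m(m+1)(m+5)/6`;
* the sum over `i₁`, i.e. over `1 ≤ m ≤ T` with weight `2n + T - m`, is
  `2n (C(T+4,4) - C(T+2,2)) + C(T+4,5) - C(T+2,3)` (summation by parts);
* the sum over `ℓ`, i.e. over `1 ≤ T ≤ e`, is
  `2n (C(e+5,5) - C(e+3,3)) + C(e+5,6) - C(e+3,4)`;
* the sum over `d`, i.e. over `1 ≤ e ≤ 2n - 1`, raises all binomial indices once more; the value at
  `e = 2n - 1` is the stated polynomial.

All ranges satisfy `a ≤ b + 1`, which is what telescoping over an integer interval needs.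
-/

/-- Telescoping over an integer interval; `a = b + 1` (empty interval) is allowed. -/
theorem sum_Icc_telescope (f F : ℤ → ℚ) (h : ∀ i, f i = F (i + 1) - F i) (a b : ℤ)
    (hab : a ≤ b + 1) : ∑ i ∈ Finset.Icc a b, f i = F (b + 1) - F a := by
  obtain ⟨k, hk⟩ := Int.eq_ofNat_of_zero_le (sub_nonneg.2 hab)
  obtain rfl : b = a + k - 1 := by omega
  clear hk hab
  induction k with
  | zero => simp
  | succ k ih =>
    have hI : Finset.Icc a (a + ((k + 1 : ℕ) : ℤ) - 1)
        = insert (a + k) (Finset.Icc a (a + k - 1)) := by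
      ext x
      simp only [Finset.mem_Icc, Finset.mem_insert]
      omega
    rw [hI, Finset.sum_insert (by simp), ih, h]
    have h1 : a + ((k + 1 : ℕ) : ℤ) - 1 + 1 = a + k + 1 := by push_cast; ring
    rw [h1, sub_add_cancel]
    ring

/-- `2n (C(T+4,4) - C(T+2,2)) + C(T+4,5) - C(T+2,3)`, the value of the two inner sums
at `T = 2n + 1 - (ℓ + d)`. -/
def innerValue (n T : ℚ) : ℚ :=
  2 * n * ((T + 4) * (T + 3) * (T + 2) * (T + 1) / 24 - (T + 2) * (T + 1) / 2)
    + (T + 4) * (T + 3) * (T + 2) * (T + 1) * T / 120 - (T + 2) * (T + 1) * T / 6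

/-- `2n (C(e+5,5) - C(e+3,3)) + C(e+5,6) - C(e+3,4)`, the value of the three inner sums
at `e = 2n - d`. -/
def middleValue (n e : ℚ) : ℚ :=
  2 * n * ((e + 5) * (e + 4) * (e + 3) * (e + 2) * (e + 1) / 120
      - (e + 3) * (e + 2) * (e + 1) / 6)
    + (e + 5) * (e + 4) * (e + 3) * (e + 2) * (e + 1) * e / 720
    - (e + 3) * (e + 2) * (e + 1) * e / 24

/-- `2n (C(e+6,6) - C(e+4,4)) + C(e+6,7) - C(e+4,5)`, the sum of `middleValue n` over
the integers from `1` to `e`. -/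
def outerValue (n e : ℚ) : ℚ :=
  2 * n * ((e + 6) * (e + 5) * (e + 4) * (e + 3) * (e + 2) * (e + 1) / 720
      - (e + 4) * (e + 3) * (e + 2) * (e + 1) / 24)
    + (e + 6) * (e + 5) * (e + 4) * (e + 3) * (e + 2) * (e + 1) * e / 5040
    - (e + 4) * (e + 3) * (e + 2) * (e + 1) * e / 120

/-- With `k = i₂ - s` and `m = i₁ - s` this is `∑_{0 ≤ k < m} (m-k+1)(k+1) = m(m+1)(m+5)/6`,
multiplied by a constant `c` (later `4n + 1 - i₁`, which does not involve `i₂`). -/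
theorem sum_i2 (c i1 ℓ d : ℤ) (h : ℓ + d ≤ i1) :
    ∑ i2 ∈ Finset.Icc (ℓ + d) (i1 - 1), ((c * (i1 - i2 + 1) * (i2 - ℓ - d + 1) : ℤ) : ℚ)
      = c * ((i1 - ℓ - d : ℚ) * (i1 - ℓ - d + 1) * (i1 - ℓ - d + 5) / 6) := by
  rw [sum_Icc_telescope _ (fun x => (c : ℚ) * ((i1 - ℓ - d + 1 : ℚ) * (x - ℓ - d) * (x - ℓ - d + 1) / 2
    - (x - ℓ - d - 1 : ℚ) * (x - ℓ - d) * (x - ℓ - d + 1) / 3)) _ _ _ (by omega)]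
  · push_cast; ring
  · intro i; push_cast; ring

theorem sum_i1 (n ℓ d : ℤ) (h : ℓ + d ≤ 2 * n + 1) :
    ∑ i1 ∈ Finset.Icc (ℓ + d + 1) (2 * n + 1),
        ((4 * n + 1 - i1 : ℤ) : ℚ) * ((i1 - ℓ - d : ℚ) * (i1 - ℓ - d + 1) * (i1 - ℓ - d + 5) / 6)
      = innerValue n (2 * n + 1 - ℓ - d) := by
  -- Summation by parts: with `A x = C(x+3,4) - C(x+1,2)` and `B x = C(x+4,5) - C(x+2,3)`,
  -- the antidifference at `x = i₁ - ℓ - d` is `(4n + 1 - i₁) A x + B x`.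
  rw [sum_Icc_telescope _ (fun i => (4 * n + 1 - i : ℚ) *
      ((i - ℓ - d + 3 : ℚ) * (i - ℓ - d + 2) * (i - ℓ - d + 1) * (i - ℓ - d) / 24
        - (i - ℓ - d + 1) * (i - ℓ - d) / 2)
      + ((i - ℓ - d + 4 : ℚ) * (i - ℓ - d + 3) * (i - ℓ - d + 2) * (i - ℓ - d + 1)
          * (i - ℓ - d) / 120
        - (i - ℓ - d + 2) * (i - ℓ - d + 1) * (i - ℓ - d) / 6)) _ _ _ (by omega)]
  · simp only [innerValue]; push_cast; ring
  · intro i; push_cast; ring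

theorem sum_l (n d : ℤ) (h : d ≤ 2 * n) :
    ∑ ℓ ∈ Finset.Icc (1 : ℤ) (2 * n - d), innerValue n (2 * n + 1 - ℓ - d)
      = middleValue n (2 * n - d) := by
  rw [sum_Icc_telescope _ (fun ℓ => - middleValue n (2 * n + 1 - ℓ - d)) _ _ _ (by omega)]
  · simp only [middleValue]; push_cast; ring
  · intro i; simp only [middleValue, innerValue]; push_cast; ring

theorem sum_d (n : ℤ) (h : 1 ≤ n) :
    ∑ d ∈ Finset.Icc (1 : ℤ) (2 * n - 1), middleValue n (2 * n - d)
      = outerValue n (2 * n - 1) := by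
  rw [sum_Icc_telescope _ (fun d => - outerValue n (2 * n - d)) _ _ _ (by omega)]
  · simp only [outerValue]; push_cast; ring
  · intro i; simp only [middleValue, outerValue]; push_cast; ring

theorem stmt13 (n : ℕ) (hn : 1 ≤ n) :
    ∑ d ∈ Finset.Icc (1:ℤ) (2*n-1), ∑ ℓ ∈ Finset.Icc (1:ℤ) (2*n-d),
        ∑ i1 ∈ Finset.Icc (ℓ+d+1) (2*n+1), ∑ i2 ∈ Finset.Icc (ℓ+d) (i1-1),
          (((4*n+1-i1)*(i1-i2+1)*(i2-ℓ-d+1) : ℤ) : ℚ)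
      = (128*(n:ℚ)^7 + 952*(n:ℚ)^6 + 1652*(n:ℚ)^5 + 490*(n:ℚ)^4 - 553*(n:ℚ)^3
          - 182*(n:ℚ)^2 + 33*(n:ℚ))/630 := by
  have key : ∀ d ∈ Finset.Icc (1:ℤ) (2*n-1), ∑ ℓ ∈ Finset.Icc (1:ℤ) (2*n-d),
        ∑ i1 ∈ Finset.Icc (ℓ+d+1) (2*n+1), ∑ i2 ∈ Finset.Icc (ℓ+d) (i1-1),
          (((4*n+1-i1)*(i1-i2+1)*(i2-ℓ-d+1) : ℤ) : ℚ)
      = middleValue (n : ℤ) (2 * (n : ℤ) - d) := by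
    intro d hd
    rw [Finset.mem_Icc] at hd
    rw [← sum_l n d (by omega)]
    refine Finset.sum_congr rfl fun ℓ hl => ?_
    rw [Finset.mem_Icc] at hl
    rw [← sum_i1 n ℓ d (by omega)]
    refine Finset.sum_congr rfl fun i1 hi => ?_
    rw [Finset.mem_Icc] at hi
    exact sum_i2 _ i1 ℓ d (by omega)
  rw [Finset.sum_congr rfl key, sum_d n (by omega)]
  simp only [outerValue]
  push_cast
  ring
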